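/- Let d,k ≥ 1 and let t be a binary tree. Then: (i) t is (d;k)-minimal if and only if t avoids comb_k^1 at every left depth at least d−1; (ii) t is (d;k)-maximal if and only if t avoids comb_{k+1} at every left depth at least d−1. -/

import Mathlib

/-- Full binary trees (every internal node has exactly two children). -/
inductive BTree : Type
  | leaf : BTree
  | node : BTree → BTree → BTree
deriving DecidableEq

namespace BTree

/-- Number of leaves of a full binary tree. -/
def numLeaves : BTree → ℕ
  | leaf => 1
  | node l r => l.numLeaves + r.numLeaves

/-- The list of pairs (left depth, right depth) of the leaves, in preorder. -/
def leafDepths : BTree → List (ℕ × ℕ)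
  | leaf => [(0, 0)]
  | node l r =>
      (l.leafDepths.map fun p => (p.1 + 1, p.2)) ++ (r.leafDepths.map fun p => (p.1, p.2 + 1))

/-- The left depth sequence `ld(t)` of the leaves of `t`, in preorder. -/
def ld (t : BTree) : List ℕ := t.leafDepths.map Prod.fst

/-- The right depth sequence `rd(t)` of the leaves of `t`, in preorder. -/
def rd (t : BTree) : List ℕ := t.leafDepths.map Prod.snd

end BTree

/-- `b ~^d c` : the sequences have equal length and agree at every position where
either entry is `< d`. -/
def DepthEq (d : ℕ) : List ℕ → List ℕ → Prop :=
  List.Forall₂ (fun a b => min a b < d → a = b)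

/-- `b ~_k c` : entrywise congruence mod `k` (and equal length). -/
def ModListEq (k : ℕ) : List ℕ → List ℕ → Prop :=
  List.Forall₂ (fun a b => a % k = b % k)

/-- The relation `t ~ t'` iff `ld(t) ~^d ld(t')` and `rd(t) ~^e rd(t')`. -/
def DeRel (d e : ℕ) (t t' : BTree) : Prop :=
  DepthEq d t.ld t'.ld ∧ DepthEq e t.rd t'.rd

/-- The relation `t ~ t'` iff `ld(t) ~_k^d ld(t')` (i.e. `ld(t) ~_k ld(t')` and
`ld(t) ~^d ld(t')`). -/
def DkRel (d k : ℕ) (t t' : BTree) : Prop :=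
  ModListEq k t.ld t'.ld ∧ DepthEq d t.ld t'.ld

/-- `T_n`: full binary trees with `n+1` leaves. -/
def Tn (n : ℕ) : Type := {t : BTree // t.numLeaves = n + 1}

/-- `C^{d,e}_n`: the number of equivalence classes of the relation `DeRel d e` on `T_n`. -/
noncomputable def Cde (d e n : ℕ) : ℕ :=
  Nat.card (Quot (fun t t' : Tn n => DeRel d e t.1 t'.1))

/-- `C^d_{k,n}`: the number of equivalence classes of `ld(t) ~_k^d ld(t')` on `T_n`. -/
noncomputable def Cdk (d k n : ℕ) : ℕ :=
  Nat.card (Quot (fun t t' : Tn n => DkRel d k t.1 t'.1))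

/-- Directions to a left or right child. -/
inductive Dir : Type
  | L : Dir
  | R : Dir
deriving DecidableEq

/-- The maximal subtree rooted at the node at position `p` (if such a node exists). -/
def subtreeAt : BTree → List Dir → Option BTree
  | t, [] => some t
  | BTree.leaf, _ :: _ => none
  | BTree.node l _, Dir.L :: p => subtreeAt l p
  | BTree.node _ r, Dir.R :: p => subtreeAt r p

/-- Replace the maximal subtree rooted at position `p` by `s` (if the position exists). -/
def replaceAt : BTree → List Dir → BTree → Option BTree
  | _, [], s => some s
  | BTree.leaf, _ :: _, _ => none
  | BTree.node l r, Dir.L :: p, s => (replaceAt l p s).map fun l' => BTree.node l' r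
  | BTree.node l r, Dir.R :: p, s => (replaceAt r p s).map fun r' => BTree.node l r'

/-- `leftAssoc t₀ [t₁,…,t_m] = t₀ ∧ t₁ ∧ ⋯ ∧ t_m` with `∧` performed left to right. -/
def leftAssoc : BTree → List BTree → BTree := List.foldl BTree.node

/-- `t'` is obtained from `t` by a right `k`-rotation at the node at position `p`:
the maximal subtree `t₀ ∧ t₁ ∧ ⋯ ∧ t_{k+1}` rooted there (with `∧` performed left to
right) is replaced by `t₀ ∧ (t₁ ∧ ⋯ ∧ t_{k+1})`.  The left depth of that node is
`p.count Dir.L`. -/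
def IsRightKRot (k : ℕ) (p : List Dir) (t t' : BTree) : Prop :=
  ∃ (t₀ t₁ : BTree) (rest : List BTree), rest.length = k ∧
    subtreeAt t p = some (leftAssoc t₀ (t₁ :: rest)) ∧
    replaceAt t p (BTree.node t₀ (leftAssoc t₁ rest)) = some t'

/-- `IsTopOf s u`: `s` is a subtree of `u` rooted at the root of `u`. -/
def IsTopOf : BTree → BTree → Prop
  | BTree.leaf, _ => True
  | BTree.node l r, BTree.node l' r' => IsTopOf l l' ∧ IsTopOf r r'
  | BTree.node _ _, BTree.leaf => False

/-- `t` contains `s` at left depth `δ`: `t` has a subtree equal to `s` rooted at a node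
of left depth `δ`. -/
def ContainsAt (t s : BTree) (δ : ℕ) : Prop :=
  ∃ (p : List Dir) (u : BTree), subtreeAt t p = some u ∧ p.count Dir.L = δ ∧ IsTopOf s u

/-- `t` avoids `s` at left depth `δ`. -/
def AvoidsAt (t s : BTree) (δ : ℕ) : Prop := ¬ ContainsAt t s δ

/-- `comb_k`: the left-to-right `∧`-product of `k+1` single leaves. -/
def comb (k : ℕ) : BTree := leftAssoc BTree.leaf (List.replicate k BTree.leaf)

/-- `comb_k^1 := t₀ ∧ comb_k` with `t₀` a single leaf. -/
def comb1 (k : ℕ) : BTree := BTree.node BTree.leaf (comb k)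

/-- One left `k`-rotation step, at a node of left depth at least `d-1`, from `t` to `t'`. -/
def LeftRotStep (d k : ℕ) (t t' : BTree) : Prop :=
  ∃ p : List Dir, d - 1 ≤ p.count Dir.L ∧ IsRightKRot k p t' t

/-- The `(d;k)`-order: `s ≤ t` iff `s` is obtained from `t` by finitely many left
`k`-rotations at nodes of left depth at least `d-1`. -/
def dkLE (d k : ℕ) (s t : BTree) : Prop := Relation.ReflTransGen (LeftRotStep d k) t s

/-- `t` is `(d;k)`-minimal. -/
def dkMinimal (d k : ℕ) (t : BTree) : Prop := ∀ s, dkLE d k s t → s = t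

/-- `t` is `(d;k)`-maximal. -/
def dkMaximal (d k : ℕ) (t : BTree) : Prop := ∀ s, dkLE d k t s → s = t

theorem aux_swap (p : List Dir) : ∀ (t t' A B : BTree),
    (subtreeAt t p = some A ∧ replaceAt t p B = some t') →
    (subtreeAt t' p = some B ∧ replaceAt t' p A = some t) := by
  induction p with
  | nil =>
    intro t t' A B h
    simp only [subtreeAt, replaceAt, Option.some.injEq] at h ⊢
    exact ⟨h.2.symm, h.1.symm⟩
  | cons c p ih =>
    intro t t' A B h
    cases t with
    | leaf => simp [subtreeAt] at h
    | node l r =>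
      cases c with
      | L =>
        simp only [subtreeAt, replaceAt, Option.map_eq_some_iff] at h
        obtain ⟨h1, l', h2, rfl⟩ := h
        obtain ⟨h3, h4⟩ := ih _ _ _ _ ⟨h1, h2⟩
        simp [subtreeAt, replaceAt, h3, h4]
      | R =>
        simp only [subtreeAt, replaceAt, Option.map_eq_some_iff] at h
        obtain ⟨h1, l', h2, rfl⟩ := h
        obtain ⟨h3, h4⟩ := ih _ _ _ _ ⟨h1, h2⟩
        simp [subtreeAt, replaceAt, h3, h4]

theorem aux_exists (p : List Dir) : ∀ (t A B : BTree), subtreeAt t p = some A →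
    ∃ t', replaceAt t p B = some t' := by
  induction p with
  | nil => intro t A B _; exact ⟨B, by simp [replaceAt]⟩
  | cons c p ih =>
    intro t A B h
    cases t with
    | leaf => simp [subtreeAt] at h
    | node l r =>
      cases c with
      | L =>
        obtain ⟨t', ht'⟩ := ih l A B (by simpa [subtreeAt] using h)
        exact ⟨BTree.node t' r, by simp [replaceAt, ht']⟩
      | R =>
        obtain ⟨t', ht'⟩ := ih r A B (by simpa [subtreeAt] using h)
        exact ⟨BTree.node l t', by simp [replaceAt, ht']⟩

theorem leftAssoc_concat (a x : BTree) (l : List BTree) :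
    leftAssoc a (l ++ [x]) = BTree.node (leftAssoc a l) x := by
  simp [leftAssoc]

theorem comb_succ_eq (m : ℕ) : comb (m + 1) = BTree.node (comb m) BTree.leaf := by
  unfold comb
  rw [List.replicate_succ', leftAssoc_concat]

theorem isTopOf_comb (m : ℕ) : ∀ u, IsTopOf (comb m) u ↔
    ∃ (a : BTree) (l : List BTree), l.length = m ∧ u = leftAssoc a l := by
  induction m with
  | zero =>
    intro u
    constructor
    · intro _; exact ⟨u, [], rfl, rfl⟩
    · intro _; simp [comb, leftAssoc, IsTopOf]
  | succ m ih =>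
    intro u
    rw [comb_succ_eq]
    constructor
    · intro h
      cases u with
      | leaf => simp [IsTopOf] at h
      | node l r =>
        simp only [IsTopOf] at h
        obtain ⟨a, q, hq, rfl⟩ := (ih l).1 h.1
        exact ⟨a, q ++ [r], by simp [hq], (leftAssoc_concat _ _ _).symm⟩
    · rintro ⟨a, q, hq, rfl⟩
      rcases List.eq_nil_or_concat q with rfl | ⟨q', x, rfl⟩
      · simp at hq
      · rw [List.concat_eq_append] at *
        rw [leftAssoc_concat]
        simp only [IsTopOf, and_true]
        exact (ih _).2 ⟨a, q', by simpa using hq, rfl⟩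

theorem numLeaves_pos_aux (t : BTree) : 0 < t.numLeaves := by
  induction t with
  | leaf => simp [BTree.numLeaves]
  | node l r h1 h2 => simp [BTree.numLeaves]; omega

theorem numLeaves_leftAssoc (l : List BTree) : ∀ a : BTree,
    a.numLeaves + l.length ≤ (leftAssoc a l).numLeaves := by
  induction l with
  | nil => intro a; simp [leftAssoc]
  | cons x l ih =>
    intro a
    have h := ih (BTree.node a x)
    have hx := numLeaves_pos_aux x
    simp only [leftAssoc, List.foldl_cons, List.length_cons, BTree.numLeaves] at h ⊢
    omega

theorem rot_ne (a b : BTree) (l : List BTree) (hl : 1 ≤ l.length) :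
    leftAssoc a (b :: l) ≠ BTree.node a (leftAssoc b l) := by
  intro h
  rcases List.eq_nil_or_concat l with rfl | ⟨q, x, rfl⟩
  · simp at hl
  · rw [List.concat_eq_append, ← List.cons_append, leftAssoc_concat] at h
    injection h with h1 _
    have h2 := numLeaves_leftAssoc (b :: q) a
    rw [h1] at h2
    simp at h2

theorem rot_irrefl (k : ℕ) (hk : 1 ≤ k) (p : List Dir) (t : BTree) : ¬ IsRightKRot k p t t := by
  rintro ⟨a, b, l, hl, h1, h2⟩
  have h3 := (aux_swap _ _ _ _ _ ⟨h1, h2⟩).1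
  rw [h1] at h3
  exact rot_ne a b l (by omega) (Option.some.inj h3)

theorem min_iff (d k : ℕ) (hk : 1 ≤ k) (t : BTree) :
    dkMinimal d k t ↔ ∀ s, ¬ LeftRotStep d k t s := by
  constructor
  · intro h s hs
    obtain rfl := h s (Relation.ReflTransGen.single hs)
    obtain ⟨p, _, hp⟩ := hs
    exact rot_irrefl k hk p _ hp
  · intro h s hs
    rcases Relation.ReflTransGen.cases_head hs with h1 | ⟨c, hc, _⟩
    · exact h1.symm
    · exact absurd hc (h c)

theorem max_iff (d k : ℕ) (hk : 1 ≤ k) (t : BTree) :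
    dkMaximal d k t ↔ ∀ s, ¬ LeftRotStep d k s t := by
  constructor
  · intro h s hs
    obtain rfl := h s (Relation.ReflTransGen.single hs)
    obtain ⟨p, _, hp⟩ := hs
    exact rot_irrefl k hk p _ hp
  · intro h s hs
    rcases Relation.ReflTransGen.cases_tail hs with h1 | ⟨c, _, hc⟩
    · exact h1.symm
    · exact absurd hc (h c)

/-- for `d,k ≥ 1` and any binary tree `t`:
(i) `t` is `(d;k)`-minimal iff `t` avoids `comb_k^1` at every left depth at least `d-1`;
(ii) `t` is `(d;k)`-maximal iff `t` avoids `comb_{k+1}` at every left depth at least `d-1`. -/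
theorem stmt10 (d k : ℕ) (hd : 1 ≤ d) (hk : 1 ≤ k) (t : BTree) :
    (dkMinimal d k t ↔ ∀ δ, d - 1 ≤ δ → AvoidsAt t (comb1 k) δ) ∧
    (dkMaximal d k t ↔ ∀ δ, d - 1 ≤ δ → AvoidsAt t (comb (k + 1)) δ) := by
  rw [min_iff d k hk, max_iff d k hk]
  refine ⟨⟨?_, ?_⟩, ⟨?_, ?_⟩⟩
  · rintro h δ hδ ⟨p, u, hu, rfl, htop⟩
    cases u with
    | leaf => simp [comb1, IsTopOf] at htop
    | node a r =>
      simp only [comb1, IsTopOf, true_and] at htop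
      obtain ⟨b, l, hl, rfl⟩ := (isTopOf_comb k _).1 htop
      obtain ⟨s, hs⟩ := aux_exists p t _ (leftAssoc a (b :: l)) hu
      exact h s ⟨p, hδ, a, b, l, hl, aux_swap _ _ _ _ _ ⟨hu, hs⟩⟩
  · rintro h s ⟨p, hp, a, b, l, hl, h12⟩
    refine h _ hp ⟨p, _, (aux_swap _ _ _ _ _ h12).1, rfl, ?_⟩
    simp only [comb1, IsTopOf, true_and]
    exact (isTopOf_comb k _).2 ⟨b, l, hl, rfl⟩
  · rintro h δ hδ ⟨p, u, hu, rfl, htop⟩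
    obtain ⟨a, q, hq, rfl⟩ := (isTopOf_comb (k + 1) _).1 htop
    cases q with
    | nil => simp at hq
    | cons b l =>
      obtain ⟨s, hs⟩ := aux_exists p t _ (BTree.node a (leftAssoc b l)) hu
      exact h s ⟨p, hδ, a, b, l, by simpa using hq, hu, hs⟩
  · rintro h s ⟨p, hp, a, b, l, hl, h1, _⟩
    exact h _ hp ⟨p, _, h1, rfl, (isTopOf_comb (k + 1) _).2 ⟨a, b :: l, by simp [hl], rfl⟩⟩
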